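/- arXiv:0708.2138 — 2 statements merged into one kernel-verified Lean document; each statement's English description precedes it below -/
import Mathlib

section
/- Let ω = Σ_{i=1}^l m_i α_i be a minuscule weight whose coefficients m_i are nonnegative rationals, I = {α ∈ S : ⟨ω, α∨⟩ = 0} and W^I = {w ∈ W : w(α) > 0 for all α ∈ I}. Then there exists a unique w ∈ W^I such that w(ω) = Σ_{i=1}^l (m_i − ⌈m_i⌉) α_i, where ⌈x⌉ denotes the ceiling of x (⌈x⌉ = x if x is an integer and ⌈x⌉ = ⌊x⌋ + 1 otherwise). -/
open scoped RealInnerProductSpace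

/-- A finite reduced crystallographic root system `Φ` spanning a real inner product
space `V`, together with a fixed base of simple roots `α 0, …, α (l-1)`: every root is
a nonnegative or nonpositive integral combination of the simple roots.  The simple
reflections `s i` are given by the usual formula `s_α(λ) = λ − ⟨λ, α∨⟩ α`. -/
structure RootSystemWithBase (V : Type*) [NormedAddCommGroup V] [InnerProductSpace ℝ V] where
  l : ℕ
  Φ : Finset V
  α : Fin l → V
  s : Fin l → V ≃ₗ[ℝ] V
  α_mem : ∀ i, α i ∈ Φ
  root_ne_zero : ∀ β ∈ Φ, β ≠ (0 : V)
  root_span : Submodule.span ℝ (Φ : Set V) = ⊤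
  simple_indep : LinearIndependent ℝ α
  crystallographic : ∀ β ∈ Φ, ∀ γ ∈ Φ, ∃ z : ℤ, 2 * ⟪β, γ⟫ / ⟪γ, γ⟫ = (z : ℝ)
  reduced : ∀ β ∈ Φ, ∀ c : ℝ, c • β ∈ Φ → c = 1 ∨ c = -1
  base : ∀ β ∈ Φ,
    (∃ c : Fin l → ℤ, (∀ i, 0 ≤ c i) ∧ β = ∑ i, (c i : ℝ) • α i) ∨
    (∃ c : Fin l → ℤ, (∀ i, 0 ≤ c i) ∧ β = -(∑ i, (c i : ℝ) • α i))
  s_apply : ∀ i v, s i v = v - (2 * ⟪v, α i⟫ / ⟪α i, α i⟫) • α i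
  s_root : ∀ β ∈ Φ, ∀ i, s i β ∈ Φ

namespace RootSystemWithBase

variable {V : Type*} [NormedAddCommGroup V] [InnerProductSpace ℝ V]

/-- The pairing `⟨λ, β∨⟩ = 2(λ,β)/(β,β)`. -/
noncomputable def pairing (_D : RootSystemWithBase V) (lam β : V) : ℝ :=
  2 * ⟪lam, β⟫ / ⟪β, β⟫

/-- The Weyl group: the subgroup of `GL(V)` generated by the simple reflections. -/
def W (D : RootSystemWithBase V) : Subgroup (V ≃ₗ[ℝ] V) := Subgroup.closure (Set.range D.s)

/-- The product `s_{i₁} · s_{i₂} ⋯ s_{i_k}` of simple reflections along a word. -/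
def wordProd (D : RootSystemWithBase V) (L : List (Fin D.l)) : V ≃ₗ[ℝ] V := (L.map D.s).prod

/-- The length `ℓ(w)`: the least `k` such that `w` is a product of `k` simple
reflections. -/
noncomputable def len (D : RootSystemWithBase V) (w : V ≃ₗ[ℝ] V) : ℕ :=
  sInf {k | ∃ L : List (Fin D.l), L.length = k ∧ D.wordProd L = w}

/-- `v` is a linear combination of the simple roots with all coefficients `≥ 0`. -/
def IsNonnegComb (D : RootSystemWithBase V) (v : V) : Prop :=
  ∃ c : Fin D.l → ℝ, (∀ i, 0 ≤ c i) ∧ v = ∑ i, c i • D.α i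

/-- `v > 0`: a nonzero nonnegative combination of the simple roots. -/
def IsPos (D : RootSystemWithBase V) (v : V) : Prop := D.IsNonnegComb v ∧ v ≠ 0

/-- `x ≤ y` for vectors: `y − x` is a nonnegative combination of the simple roots. -/
def vle (D : RootSystemWithBase V) (x y : V) : Prop := D.IsNonnegComb (y - x)

/-- `λ` is dominant: `⟨λ, αᵢ∨⟩ ≥ 0` for all `i`. -/
def IsDominant (D : RootSystemWithBase V) (lam : V) : Prop :=
  ∀ i, 0 ≤ D.pairing lam (D.α i)

/-- `ω` is minuscule: dominant with `⟨ω, β∨⟩ ∈ {−1, 0, 1}` for every root `β`. -/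
def IsMinuscule (D : RootSystemWithBase V) (ω : V) : Prop :=
  D.IsDominant ω ∧ ∀ β ∈ D.Φ, D.pairing ω β = -1 ∨ D.pairing ω β = 0 ∨ D.pairing ω β = 1

/-- `W^I = {w ∈ W : w(α) > 0 for all α ∈ I}` where `I = {α ∈ S : ⟨ω, α∨⟩ = 0}`. -/
def WI (D : RootSystemWithBase V) (ω : V) : Set (V ≃ₗ[ℝ] V) :=
  {w | w ∈ D.W ∧ ∀ i, D.pairing ω (D.α i) = 0 → D.IsPos (w (D.α i))}

/-- `w ≤ τ` in `W`:  `ℓ(τ) = ℓ(w) + ℓ(τ w⁻¹)`. -/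
def wle (D : RootSystemWithBase V) (w τ : V ≃ₗ[ℝ] V) : Prop :=
  D.len τ = D.len w + D.len (τ * w⁻¹)

end RootSystemWithBase

namespace RootSystemWithBase

section aux
variable {V : Type*} [NormedAddCommGroup V] [InnerProductSpace ℝ V] (D : RootSystemWithBase V)

lemma aux_aa (i : Fin D.l) : (0 : ℝ) < ⟪D.α i, D.α i⟫ := by
  rw [real_inner_self_eq_norm_sq]
  have := norm_pos_iff.mpr (D.root_ne_zero _ (D.α_mem i))
  positivity

lemma aux_coord {a b : Fin D.l → ℝ} (h : ∑ i, a i • D.α i = ∑ i, b i • D.α i) (i : Fin D.l) :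
    a i = b i := by
  have h2 : ∑ i, (a i - b i) • D.α i = 0 := by
    simp [sub_smul, Finset.sum_sub_distrib, h]
  have := Fintype.linearIndependent_iff.mp D.simple_indep _ h2 i
  linarith

lemma aux_pos_neg {v : V} (h : D.IsPos v) (h' : D.IsPos (-v)) : False := by
  obtain ⟨⟨c, hc, hv⟩, h0⟩ := h
  obtain ⟨⟨d, hd, hv'⟩, -⟩ := h'
  apply h0
  have : ∑ i, c i • D.α i = ∑ i, (-d i) • D.α i := by
    rw [← hv]; simp only [neg_smul, Finset.sum_neg_distrib]; rw [← hv', neg_neg]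
  rw [hv]
  refine Finset.sum_eq_zero fun i _ => ?_
  have h1 := D.aux_coord this i
  have : c i = 0 := by linarith [hc i, hd i]
  simp [this]

lemma aux_dich {β : V} (h : β ∈ D.Φ) : D.IsPos β ∨ D.IsPos (-β) := by
  have h0 := D.root_ne_zero β h
  rcases D.base β h with ⟨c, hc, e⟩ | ⟨c, hc, e⟩
  · exact Or.inl ⟨⟨fun i => c i, fun i => Int.cast_nonneg (hc i), e⟩, h0⟩
  · exact Or.inr ⟨⟨fun i => c i, fun i => Int.cast_nonneg (hc i), by rw [e, neg_neg]⟩,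
      neg_ne_zero.mpr h0⟩

lemma aux_simple_pos (i : Fin D.l) : D.IsPos (D.α i) := by
  refine ⟨⟨Pi.single i 1, fun j => ?_, ?_⟩, D.root_ne_zero _ (D.α_mem i)⟩
  · by_cases h : j = i
    · subst h; simp
    · simp [h]
  · simp [Pi.single_apply, ite_smul]

lemma aux_single (j : Fin D.l) (t : ℝ) :
    t • D.α j = ∑ i, (if i = j then t else 0) • D.α i := by
  simp [ite_smul]

lemma aux_refl_pos {β : V} (hβ : β ∈ D.Φ) (hp : D.IsPos β) (j : Fin D.l) (hj : β ≠ D.α j) :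
    D.IsPos (D.s j β) := by
  rcases D.aux_dich (D.s_root β hβ j) with h | h
  · exact h
  exfalso
  obtain ⟨⟨c, hc, e⟩, h0⟩ := hp
  obtain ⟨⟨d, hd, e'⟩, -⟩ := h
  rw [D.s_apply] at e'
  set t := 2 * ⟪β, D.α j⟫ / ⟪D.α j, D.α j⟫
  have key : ∑ i, c i • D.α i = ∑ i, ((if i = j then t else 0) - d i) • D.α i := by
    simp only [sub_smul, Finset.sum_sub_distrib]
    rw [← e, ← e', ← D.aux_single j t]; abel
  have hz : ∀ i, i ≠ j → c i = 0 := fun i hi => by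
    have := D.aux_coord key i
    simp [hi] at this
    linarith [hc i, hd i]
  have hb : β = c j • D.α j := by
    rw [e]
    exact Finset.sum_eq_single j (fun i _ hi => by simp [hz i hi]) (by simp)
  rcases D.reduced _ (D.α_mem j) (c j) (hb ▸ hβ) with h | h
  · exact hj (by rw [hb, h, one_smul])
  · linarith [hc j]

lemma aux_obtuse {i j : Fin D.l} (hij : i ≠ j) : ⟪D.α i, D.α j⟫ ≤ (0 : ℝ) := by
  by_contra! hlt
  have hne : D.α i ≠ D.α j := fun h => hij (D.simple_indep.injective h)
  obtain ⟨⟨c, hc, e⟩, -⟩ := D.aux_refl_pos (D.α_mem i) (D.aux_simple_pos i) j hne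
  rw [D.s_apply] at e
  set t := 2 * ⟪D.α i, D.α j⟫ / ⟪D.α j, D.α j⟫ with ht
  have htp : 0 < t := by have := D.aux_aa j; positivity
  have key : ∑ k, c k • D.α k =
      ∑ k, ((if k = i then 1 else 0) - (if k = j then t else 0)) • D.α k := by
    simp only [sub_smul, Finset.sum_sub_distrib]
    rw [← e, ← D.aux_single j t, ← D.aux_single i 1, one_smul]
  have := D.aux_coord key j
  simp [hij.symm] at this
  linarith [hc j]

lemma aux_s_self (i : Fin D.l) : D.s i (D.α i) = - D.α i := by
  rw [D.s_apply, mul_div_assoc, div_self (D.aux_aa i).ne', mul_one, two_smul]; abel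

lemma aux_s_iso (i : Fin D.l) (x y : V) : ⟪D.s i x, D.s i y⟫ = (⟪x, y⟫ : ℝ) := by
  have := (D.aux_aa i).ne'
  rw [D.s_apply, D.s_apply]
  simp only [inner_sub_left, inner_sub_right, real_inner_smul_left, real_inner_smul_right]
  rw [real_inner_comm y (D.α i)]
  field_simp
  ring

lemma aux_s_invol (i : Fin D.l) : D.s i * D.s i = 1 := by
  ext x
  have := (D.aux_aa i).ne'
  change D.s i (D.s i x) = x
  rw [D.s_apply i x, map_sub, map_smul, aux_s_self, D.s_apply i x]
  simp

lemma aux_word_iso (L : List (Fin D.l)) (x y : V) :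
    ⟪D.wordProd L x, D.wordProd L y⟫ = (⟪x, y⟫ : ℝ) := by
  induction L with
  | nil => rfl
  | cons j L ih =>
    have : D.wordProd (j :: L) = D.s j * D.wordProd L := by simp [wordProd]
    rw [this]
    exact (D.aux_s_iso j _ _).trans ih

lemma aux_word_root (L : List (Fin D.l)) {β : V} (h : β ∈ D.Φ) : D.wordProd L β ∈ D.Φ := by
  induction L with
  | nil => exact h
  | cons j L ih =>
    have : D.wordProd (j :: L) = D.s j * D.wordProd L := by simp [wordProd]
    rw [this]
    exact D.s_root _ ih j

lemma aux_word {w : V ≃ₗ[ℝ] V} (h : w ∈ D.W) : ∃ L, w = D.wordProd L := by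
  unfold W at h
  induction h using Subgroup.closure_induction with
  | mem x hx => obtain ⟨i, rfl⟩ := hx; exact ⟨[i], by simp [wordProd]⟩
  | one => exact ⟨[], by simp [wordProd]⟩
  | mul x y _ _ hx hy =>
    obtain ⟨L, rfl⟩ := hx
    obtain ⟨M, rfl⟩ := hy
    exact ⟨L ++ M, by simp [wordProd]⟩
  | inv x _ hx =>
    obtain ⟨L, rfl⟩ := hx
    refine ⟨L.reverse, ?_⟩
    rw [inv_eq_iff_mul_eq_one]
    clear * -
    induction L with
    | nil => simp [wordProd]
    | cons j L ih =>
      simp only [wordProd, List.map_cons, List.prod_cons, List.reverse_cons, List.map_append,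
        List.prod_append, List.map_nil, List.prod_nil, mul_one] at ih ⊢
      rw [mul_assoc, ← mul_assoc (List.map D.s L).prod, ih, one_mul, aux_s_invol]

lemma aux_conj (g : V ≃ₗ[ℝ] V) (hg : ∀ x y, ⟪g x, g y⟫ = (⟪x, y⟫ : ℝ)) (i j : Fin D.l)
    (h : g (D.α i) = D.α j) : D.s j * g = g * D.s i := by
  ext x
  change D.s j (g x) = g (D.s i x)
  rw [D.s_apply, D.s_apply, map_sub, map_smul, ← h, hg, hg]

lemma aux_exchange (L : List (Fin D.l)) (i : Fin D.l) (h : ¬ D.IsPos (D.wordProd L (D.α i))) :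
    ∃ M, M.length < L.length ∧ D.wordProd L * D.s i = D.wordProd M := by
  induction L with
  | nil => exact absurd (D.aux_simple_pos i) h
  | cons j L ih =>
    have e : ∀ L, D.wordProd (j :: L) = D.s j * D.wordProd L := by simp [wordProd]
    by_cases hL : D.IsPos (D.wordProd L (D.α i))
    · have hj : D.wordProd L (D.α i) = D.α j := by
        by_contra hne
        apply h
        rw [e]
        exact D.aux_refl_pos (D.aux_word_root L (D.α_mem i)) hL j hne
      refine ⟨L, by simp, ?_⟩
      rw [e, D.aux_conj _ (D.aux_word_iso L) i j hj, mul_assoc, aux_s_invol, mul_one]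
    · obtain ⟨M, hM, hM'⟩ := ih hL
      exact ⟨j :: M, by simpa using hM, by rw [e, e, mul_assoc, hM']⟩

lemma aux_trivial (n : ℕ) : ∀ (L : List (Fin D.l)), L.length = n →
    (∀ i, D.IsPos (D.wordProd L (D.α i))) → D.wordProd L = 1 := by
  induction n using Nat.strong_induction_on with
  | _ n ih =>
    intro L hL hpos
    rcases List.eq_nil_or_concat L with rfl | ⟨L0, i, rfl⟩
    · simp [wordProd]
    have e : D.wordProd (L0 ++ [i]) = D.wordProd L0 * D.s i := by simp [wordProd]
    rw [List.concat_eq_append] at *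
    have h1 := hpos i
    rw [e] at h1
    change D.IsPos (D.wordProd L0 (D.s i (D.α i))) at h1
    rw [aux_s_self, map_neg] at h1
    obtain ⟨M, hM, hM'⟩ := D.aux_exchange L0 i (fun h => D.aux_pos_neg h h1)
    rw [e, hM'] at hpos ⊢
    refine ih M.length ?_ M rfl hpos
    rw [← hL]; simp; omega

/-- A positive root orthogonal to the dominant `ω` is sent to a positive root by `W^I`. -/
lemma aux_WI_pos {ω : V} (hd : D.IsDominant ω) {w : V ≃ₗ[ℝ] V} (hw : w ∈ D.WI ω) {β : V}
    (hp : D.IsPos β) (h0 : ⟪ω, β⟫ = (0 : ℝ)) : D.IsPos (w β) := by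
  obtain ⟨⟨c, hc, e⟩, hne⟩ := hp
  have hin : ∀ i, 0 ≤ (⟪ω, D.α i⟫ : ℝ) := fun i => by
    have h := hd i
    have ha := D.aux_aa i
    unfold pairing at h
    by_contra! hlt
    have : 2 * ⟪ω, D.α i⟫ / ⟪D.α i, D.α i⟫ < (0 : ℝ) := div_neg_of_neg_of_pos (by linarith) ha
    linarith
  have hs : ∑ i, c i * ⟪ω, D.α i⟫ = (0 : ℝ) := by
    rw [e, inner_sum] at h0
    simpa [real_inner_smul_right] using h0
  rw [Finset.sum_eq_zero_iff_of_nonneg (fun i _ => mul_nonneg (hc i) (hin i))] at hs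
  have hterm : ∀ i, ∃ d : Fin D.l → ℝ, (∀ k, 0 ≤ d k) ∧ c i • w (D.α i) = ∑ k, d k • D.α k := by
    intro i
    rcases mul_eq_zero.mp (hs i (Finset.mem_univ i)) with h | h
    · exact ⟨0, by simp, by simp [h]⟩
    · obtain ⟨⟨d, hd, ed⟩, -⟩ := hw.2 i (by simp [pairing, h])
      refine ⟨fun k => c i * d k, fun k => mul_nonneg (hc i) (hd k), ?_⟩
      rw [ed, Finset.smul_sum]
      simp [smul_smul]
  choose d hd1 hd2 using hterm
  refine ⟨⟨fun k => ∑ i, d i k, fun k => Finset.sum_nonneg fun i _ => hd1 i k, ?_⟩,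
    fun h => hne (by simpa using h)⟩
  rw [e, map_sum]
  simp only [map_smul, hd2, Finset.sum_smul]
  exact Finset.sum_comm

lemma aux_dom_pos {ω : V} (hd : D.IsDominant ω) {β : V} (hp : D.IsPos β) :
    0 ≤ (⟪ω, β⟫ : ℝ) := by
  obtain ⟨⟨c, hc, e⟩, hne⟩ := hp
  rw [e, inner_sum]
  refine Finset.sum_nonneg fun i _ => ?_
  rw [real_inner_smul_right]
  refine mul_nonneg (hc i) ?_
  have h := hd i
  have ha := D.aux_aa i
  unfold pairing at h
  by_contra! hlt
  have : 2 * ⟪ω, D.α i⟫ / ⟪D.α i, D.α i⟫ < (0 : ℝ) := div_neg_of_neg_of_pos (by linarith) ha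
  linarith

lemma aux_unique {ω : V} (hd : D.IsDominant ω) {w w' : V ≃ₗ[ℝ] V} (hw : w ∈ D.WI ω)
    (hw' : w' ∈ D.WI ω) (h : w ω = w' ω) : w = w' := by
  obtain ⟨L, hL⟩ := D.aux_word (D.W.mul_mem (D.W.inv_mem hw.1) hw'.1)
  have hwL : w * D.wordProd L = w' := by rw [← hL]; group
  have hfix : D.wordProd L ω = ω := by
    apply w.injective
    rw [h, ← hwL]; rfl
  have : D.wordProd L = 1 := by
    refine D.aux_trivial _ L rfl fun i => ?_
    have hinn : (⟪ω, D.wordProd L (D.α i)⟫ : ℝ) = ⟪ω, D.α i⟫ := by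
      conv_lhs => rw [← hfix]
      exact D.aux_word_iso L _ _
    rcases D.aux_dich (D.aux_word_root L (D.α_mem i)) with hp | hn
    · exact hp
    exfalso
    have h1 := D.aux_dom_pos hd hn
    have h2 := D.aux_dom_pos hd (D.aux_simple_pos i)
    rw [inner_neg_right, hinn] at h1
    have h3 : (⟪ω, D.α i⟫ : ℝ) = 0 := by linarith
    have h4 := D.aux_WI_pos hd hw hn (by rw [inner_neg_right, hinn, h3, neg_zero])
    have h5 := D.aux_WI_pos hd hw' (D.aux_simple_pos i) h3
    rw [map_neg] at h4
    rw [← hwL] at h5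
    exact D.aux_pos_neg h5 h4
  rw [← hwL, this, mul_one]

lemma aux_find (x : Fin D.l → ℝ) (h : ∃ i, 0 < x i) :
    ∃ j, 0 < x j ∧ 0 < (⟪∑ i, x i • D.α i, D.α j⟫ : ℝ) := by
  by_contra! hcon
  set y := ∑ i, max (x i) 0 • D.α i with hy
  have hle : (⟪y, y⟫ : ℝ) ≤ 0 := by
    have e1 : (⟪y, y⟫ : ℝ) = ∑ j, max (x j) 0 * ⟪y, D.α j⟫ := by
      conv_lhs => arg 3; rw [hy]
      rw [inner_sum]
      simp only [real_inner_smul_right]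
    rw [e1]
    refine Finset.sum_nonpos fun j _ => ?_
    rcases le_or_gt (x j) 0 with hj | hj
    · simp [max_eq_right hj]
    refine mul_nonpos_of_nonneg_of_nonpos (le_max_right _ _) (le_trans ?_ (hcon j hj))
    rw [hy, sum_inner, sum_inner]
    refine Finset.sum_le_sum fun i _ => ?_
    rw [real_inner_smul_left, real_inner_smul_left]
    by_cases hij : i = j
    · subst hij; rw [max_eq_left hj.le]
    · exact mul_le_mul_of_nonpos_right (le_max_left _ _) (D.aux_obtuse hij)
  have hy0 : y = 0 := by
    rw [real_inner_self_eq_norm_sq] at hle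
    have : ‖y‖ = 0 := by nlinarith [norm_nonneg y]
    exact norm_eq_zero.mp this
  obtain ⟨i, hi⟩ := h
  have := Fintype.linearIndependent_iff.mp D.simple_indep _ (hy.symm.trans hy0) i
  rw [max_eq_left hi.le] at this
  linarith

lemma aux_exists (m : Fin D.l → ℚ) (ω : V) (hmin : D.IsMinuscule ω) (n : ℕ) :
    ∀ (c : Fin D.l → ℤ) (w : V ≃ₗ[ℝ] V), w ∈ D.WI ω →
      w ω = ∑ i, ((m i : ℝ) - (c i : ℝ)) • D.α i → (∀ i, c i ≤ ⌈m i⌉) →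
      ∑ i, (⌈m i⌉ - c i) = n →
    ∃ w : V ≃ₗ[ℝ] V, w ∈ D.WI ω ∧
      w ω = ∑ i, ((m i : ℝ) - ((⌈m i⌉ : ℤ) : ℝ)) • D.α i := by
  induction n with
  | zero =>
    intro c w hw e hc hs
    rw [Nat.cast_zero, Finset.sum_eq_zero_iff_of_nonneg (fun i _ => by linarith [hc i])] at hs
    refine ⟨w, hw, e.trans (Finset.sum_congr rfl fun i hi => ?_)⟩
    have : ⌈m i⌉ = c i := by linarith [hs i hi]
    rw [this]
  | succ n ih =>
    intro c w hw e hc hs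
    have hpos : ∀ i, 0 < ((m i : ℝ) - (c i : ℝ)) ↔ c i < ⌈m i⌉ := fun i => by
      rw [Int.lt_ceil, sub_pos]; exact_mod_cast Iff.rfl
    obtain ⟨j, hj1, hj2⟩ := D.aux_find (fun i => (m i : ℝ) - (c i : ℝ)) (by
      by_contra! hcon
      have : ∑ i, (⌈m i⌉ - c i) ≤ 0 := Finset.sum_nonpos fun i _ => by
        have := (hpos i).not.mp (not_lt.mpr (hcon i))
        linarith
      omega)
    rw [← e] at hj2
    have hj1 := (hpos j).mp hj1
    obtain ⟨L, hL⟩ := D.aux_word hw.1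
    obtain ⟨M, hM⟩ := D.aux_word (D.W.inv_mem hw.1)
    have iso : ∀ x y, ⟪w x, w y⟫ = (⟪x, y⟫ : ℝ) := by rw [hL]; exact D.aux_word_iso L
    have hwM : w (D.wordProd M (D.α j)) = D.α j := by
      rw [← hM]; exact w.apply_symm_apply _
    have hpair : 2 * ⟪w ω, D.α j⟫ / ⟪D.α j, D.α j⟫ = (1 : ℝ) := by
      have h1 := hmin.2 _ (D.aux_word_root M (D.α_mem j))
      unfold pairing at h1
      rw [← iso ω, ← iso (D.wordProd M (D.α j)), hwM] at h1
      have : 0 < 2 * ⟪w ω, D.α j⟫ / (⟪D.α j, D.α j⟫ : ℝ) := by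
        have := D.aux_aa j; positivity
      rcases h1 with h | h | h
      · linarith
      · linarith
      · exact h
    refine ih (fun i => c i + if i = j then 1 else 0) (D.s j * w)
      ⟨D.W.mul_mem (Subgroup.subset_closure ⟨j, rfl⟩) hw.1, fun i hi => ?_⟩ ?_ (fun i => ?_) ?_
    · refine D.aux_refl_pos (by rw [hL]; exact D.aux_word_root L (D.α_mem i)) (hw.2 i hi) j ?_
      intro h
      rw [← h, iso] at hj2
      unfold pairing at hi
      have := D.aux_aa i
      have : 0 < 2 * ⟪ω, D.α i⟫ / (⟪D.α i, D.α i⟫ : ℝ) := by positivity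
      linarith
    · change D.s j (w ω) = _
      rw [D.s_apply, hpair, e, D.aux_single j 1, ← Finset.sum_sub_distrib]
      refine Finset.sum_congr rfl fun i _ => ?_
      rw [← sub_smul]
      congr 1
      split_ifs <;> push_cast <;> ring
    · by_cases h : i = j
      · subst h; simp; omega
      · simpa [h] using hc i
    · simp only [← sub_sub, Finset.sum_sub_distrib] at hs ⊢
      simp
      push_cast at hs
      linarith

end aux

end RootSystemWithBase

/-- Let `ω = ∑ m i • α i` be a minuscule weight with nonnegative
rational coefficients.  Then there is a unique `w ∈ W^I` with
`w(ω) = ∑ (m i − ⌈m i⌉) • α i`. -/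
theorem stmt5 {V : Type*} [NormedAddCommGroup V] [InnerProductSpace ℝ V]
    (D : RootSystemWithBase V) (m : Fin D.l → ℚ) (hm : ∀ i, 0 ≤ m i)
    (ω : V) (hω : ω = ∑ i, (m i : ℝ) • D.α i) (hmin : D.IsMinuscule ω) :
    ∃! w : V ≃ₗ[ℝ] V, w ∈ D.WI ω ∧
      w ω = ∑ i, ((m i : ℝ) - ((⌈m i⌉ : ℤ) : ℝ)) • D.α i := by
  have h1 : (1 : V ≃ₗ[ℝ] V) ∈ D.WI ω := ⟨D.W.one_mem, fun i _ => D.aux_simple_pos i⟩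
  have hc : ∀ i, 0 ≤ ⌈m i⌉ := fun i => Int.ceil_nonneg (hm i)
  have hn : 0 ≤ ∑ i, (⌈m i⌉ - 0) := Finset.sum_nonneg fun i _ => by simpa using hc i
  obtain ⟨w, hw, e⟩ := D.aux_exists m ω hmin (∑ i, (⌈m i⌉ - 0)).toNat (fun _ => 0) 1 h1
    (by simpa using hω) hc (Int.toNat_of_nonneg hn).symm
  exact ⟨w, ⟨hw, e⟩, fun w' hw' => D.aux_unique hmin.1 hw'.1 hw (hw'.2.trans e.symm)⟩
end

section
/- Let ω = Σ_{i=1}^l m_i α_i be a minuscule weight whose coefficients m_i are nonnegative rationals, I = {α ∈ S : ⟨ω, α∨⟩ = 0} and W^I = {w ∈ W : w(α) > 0 for all α ∈ I}. Then there exists a unique τ ∈ W^I such that τ(ω) = Σ_{i=1}^l (m_i − ⌊m_i⌋) α_i, where ⌊x⌋ denotes the floor (integer part) of x. -/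
open scoped RealInnerProductSpace

namespace RootSystemWithBase

variable {V : Type*} [NormedAddCommGroup V] [InnerProductSpace ℝ V]

theorem aux_span (D : RootSystemWithBase V) : ⊤ ≤ Submodule.span ℝ (Set.range D.α) := by
  rw [← D.root_span, Submodule.span_le]
  intro β hβ
  have key : ∀ c : Fin D.l → ℤ, ∑ i, (c i : ℝ) • D.α i ∈ Submodule.span ℝ (Set.range D.α) :=
    fun c => Submodule.sum_mem _ fun i _ =>
      Submodule.smul_mem _ _ (Submodule.subset_span ⟨i, rfl⟩)
  rcases D.base β hβ with ⟨c, -, h⟩ | ⟨c, -, h⟩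
  · rw [h]; exact key c
  · rw [h]; exact Submodule.neg_mem _ (key c)

/-- The simple roots as a basis. -/
noncomputable def bas (D : RootSystemWithBase V) : Module.Basis (Fin D.l) ℝ V :=
  Module.Basis.mk D.simple_indep D.aux_span

/-- Coordinates with respect to the simple roots. -/
noncomputable def co (D : RootSystemWithBase V) (i : Fin D.l) : V →ₗ[ℝ] ℝ := D.bas.coord i

theorem bas_apply (D : RootSystemWithBase V) (i : Fin D.l) : D.bas i = D.α i := by
  simp [bas]

theorem sum_co (D : RootSystemWithBase V) (v : V) : ∑ i, D.co i v • D.α i = v := by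
  have := D.bas.sum_repr v
  simpa [co, bas_apply] using this

theorem co_sum (D : RootSystemWithBase V) (c : Fin D.l → ℝ) (j : Fin D.l) :
    D.co j (∑ i, c i • D.α i) = c j := by
  have := D.bas.repr_sum_self c
  have h := congrFun this j
  simpa [co, bas_apply] using h

theorem co_α (D : RootSystemWithBase V) (i j : Fin D.l) :
    D.co j (D.α i) = if i = j then 1 else 0 := by
  rw [← bas_apply, co, Module.Basis.coord_apply, Module.Basis.repr_self, Finsupp.single_apply]

theorem co_ext (D : RootSystemWithBase V) {v w : V} (h : ∀ i, D.co i v = D.co i w) : v = w := by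
  rw [← D.sum_co v, ← D.sum_co w]; simp [h]

theorem inner_co (D : RootSystemWithBase V) (x y : V) :
    ⟪x, y⟫ = ∑ i, D.co i y * ⟪x, D.α i⟫ := by
  conv_lhs => rw [← D.sum_co y]
  simp [inner_sum, inner_smul_right]

theorem α_pos (D : RootSystemWithBase V) (i : Fin D.l) : 0 < ⟪D.α i, D.α i⟫ :=
  real_inner_self_pos.2 (D.root_ne_zero _ (D.α_mem i))

theorem nonnegComb_iff (D : RootSystemWithBase V) (v : V) :
    D.IsNonnegComb v ↔ ∀ i, 0 ≤ D.co i v := by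
  constructor
  · rintro ⟨c, hc, rfl⟩ i
    rw [co_sum]; exact hc i
  · intro h
    exact ⟨fun i => D.co i v, h, (D.sum_co v).symm⟩

theorem root_sign (D : RootSystemWithBase V) {β : V} (hβ : β ∈ D.Φ) :
    (∀ i, 0 ≤ D.co i β) ∨ (∀ i, D.co i β ≤ 0) := by
  rcases D.base β hβ with ⟨c, hc, h⟩ | ⟨c, hc, h⟩
  · left; intro i; rw [h, co_sum]; exact_mod_cast hc i
  · right; intro i; rw [h, map_neg, co_sum]
    have : (0:ℝ) ≤ c i := by exact_mod_cast hc i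
    linarith

theorem not_both (D : RootSystemWithBase V) {β : V} (hβ : β ∈ D.Φ)
    (h1 : ∀ i, 0 ≤ D.co i β) (h2 : ∀ i, D.co i β ≤ 0) : False := by
  apply D.root_ne_zero β hβ
  apply D.co_ext
  intro i
  rw [map_zero]
  exact le_antisymm (h2 i) (h1 i)

theorem co_s (D : RootSystemWithBase V) (i k : Fin D.l) (v : V) :
    D.co k (D.s i v) = D.co k v - D.pairing v (D.α i) * (if i = k then 1 else 0) := by
  rw [s_apply, map_sub, map_smul, co_α]; rfl

theorem α_inner_nonpos (D : RootSystemWithBase V) {i j : Fin D.l} (hij : i ≠ j) :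
    ⟪D.α i, D.α j⟫ ≤ 0 := by
  by_contra hpos
  push Not at hpos
  have hp : 0 < D.pairing (D.α i) (D.α j) := by
    unfold pairing; have := D.α_pos j; positivity
  have hr := D.s_root _ (D.α_mem i) j
  rcases D.root_sign hr with h | h
  · have := h j
    rw [co_s, co_α] at this
    simp [hij] at this
    linarith
  · have := h i
    rw [co_s, co_α] at this
    simp [hij.symm] at this
    linarith

theorem s_inner (D : RootSystemWithBase V) (i : Fin D.l) (x y : V) :
    ⟪D.s i x, D.s i y⟫ = ⟪x, y⟫ := by
  have := (D.α_pos i).ne'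
  rw [s_apply, s_apply]
  simp only [inner_sub_left, inner_sub_right, real_inner_smul_left, real_inner_smul_right]
  rw [real_inner_comm y (D.α i)]
  field_simp
  ring

theorem s_s (D : RootSystemWithBase V) (i : Fin D.l) (x : V) : D.s i (D.s i x) = x := by
  have := (D.α_pos i).ne'
  rw [s_apply, s_apply]
  simp only [inner_sub_left, real_inner_smul_left]
  have h : 2 * (⟪x, D.α i⟫ - 2 * ⟪x, D.α i⟫ / ⟪D.α i, D.α i⟫ * ⟪D.α i, D.α i⟫) / ⟪D.α i, D.α i⟫
      = -(2 * ⟪x, D.α i⟫ / ⟪D.α i, D.α i⟫) := by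
    field_simp; ring
  rw [h]; module

theorem s_mul_s (D : RootSystemWithBase V) (i : Fin D.l) : D.s i * D.s i = 1 := by
  ext x; exact D.s_s i x

theorem s_inv (D : RootSystemWithBase V) (i : Fin D.l) : (D.s i)⁻¹ = D.s i :=
  inv_eq_of_mul_eq_one_left (D.s_mul_s i)

theorem s_self (D : RootSystemWithBase V) (i : Fin D.l) : D.s i (D.α i) = - D.α i := by
  have := (D.α_pos i).ne'
  rw [s_apply]
  rw [mul_div_assoc, div_self this]; module

theorem s_mem (D : RootSystemWithBase V) (i : Fin D.l) : D.s i ∈ D.W :=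
  Subgroup.subset_closure ⟨i, rfl⟩

theorem wordProd_mem (D : RootSystemWithBase V) (L : List (Fin D.l)) : D.wordProd L ∈ D.W := by
  apply Subgroup.list_prod_mem
  intro x hx
  rw [List.mem_map] at hx
  obtain ⟨i, -, rfl⟩ := hx
  exact D.s_mem i

theorem wordProd_cons (D : RootSystemWithBase V) (i : Fin D.l) (L : List (Fin D.l)) :
    D.wordProd (i :: L) = D.s i * D.wordProd L := by
  simp [wordProd]

theorem wordProd_concat (D : RootSystemWithBase V) (i : Fin D.l) (L : List (Fin D.l)) :
    D.wordProd (L ++ [i]) = D.wordProd L * D.s i := by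
  simp [wordProd]

theorem exists_word (D : RootSystemWithBase V) {w : V ≃ₗ[ℝ] V} (hw : w ∈ D.W) :
    ∃ L, D.wordProd L = w := by
  induction hw using Subgroup.closure_induction with
  | mem x hx => obtain ⟨i, rfl⟩ := hx; exact ⟨[i], by simp [wordProd]⟩
  | one => exact ⟨[], by simp [wordProd]⟩
  | mul x y _ _ hx hy =>
    obtain ⟨L, rfl⟩ := hx; obtain ⟨L', rfl⟩ := hy
    exact ⟨L ++ L', by simp [wordProd]⟩
  | inv x _ hx =>
    obtain ⟨L, rfl⟩ := hx
    refine ⟨L.reverse, ?_⟩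
    induction L with
    | nil => simp [wordProd]
    | cons i L ih =>
      rw [List.reverse_cons, wordProd_concat, wordProd_cons, ih (D.wordProd_mem L), mul_inv_rev, s_inv]

theorem W_props (D : RootSystemWithBase V) {w : V ≃ₗ[ℝ] V} (hw : w ∈ D.W) :
    (∀ β ∈ D.Φ, w β ∈ D.Φ) ∧ (∀ x y, ⟪w x, w y⟫ = ⟪x, y⟫) := by
  obtain ⟨L, rfl⟩ := D.exists_word hw
  induction L with
  | nil => simp [wordProd]
  | cons i L ih =>
    obtain ⟨h1, h2⟩ := ih (D.wordProd_mem L)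
    rw [wordProd_cons]
    refine ⟨fun β hβ => D.s_root _ (h1 β hβ) i, fun x y => ?_⟩
    rw [LinearEquiv.mul_apply, LinearEquiv.mul_apply, s_inner, h2]

theorem pos_of_s_neg (D : RootSystemWithBase V) {β : V} (hβ : β ∈ D.Φ) (j : Fin D.l)
    (h1 : ∀ i, 0 ≤ D.co i β) (h2 : ∀ i, D.co i (D.s j β) ≤ 0) : β = D.α j := by
  have hz : ∀ i, j ≠ i → D.co i β = 0 := by
    intro i hi
    have := h2 i
    rw [co_s] at this
    simp [hi] at this
    exact le_antisymm this (h1 i)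
  have he : β = D.co j β • D.α j := by
    apply D.co_ext
    intro i
    rw [map_smul, co_α]
    by_cases hi : j = i
    · subst hi; simp
    · simp [hi, hz i hi]
  rcases D.reduced _ (D.α_mem j) (D.co j β) (he ▸ hβ) with h | h
  · rw [h, one_smul] at he; exact he
  · have := h1 j; linarith

theorem exchange (D : RootSystemWithBase V) (i : Fin D.l) (L : List (Fin D.l))
    (h : ∀ k, D.co k (D.wordProd L (D.α i)) ≤ 0) :
    ∃ L', D.wordProd L' = D.wordProd L * D.s i ∧ L'.length < L.length := by
  induction L with
  | nil =>
    have := h i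
    simp [wordProd, co_α] at this
    linarith
  | cons j L ih =>
    have hr : D.wordProd L (D.α i) ∈ D.Φ := (D.W_props (D.wordProd_mem L)).1 _ (D.α_mem i)
    rcases D.root_sign hr with hp | hn
    · have he := D.pos_of_s_neg hr j hp (by rw [wordProd_cons] at h; exact h)
      refine ⟨L, ?_, by simp⟩
      rw [wordProd_cons]
      have hc : D.s j * D.wordProd L = D.wordProd L * D.s i := by
        ext x
        rw [LinearEquiv.mul_apply, LinearEquiv.mul_apply, s_apply, s_apply, map_sub, map_smul, he]
        have hi := (D.W_props (D.wordProd_mem L)).2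
        rw [← hi x, ← hi (D.α i), he]
      rw [hc, mul_assoc, s_mul_s, mul_one]
    · obtain ⟨L', h1, h2⟩ := ih hn
      refine ⟨j :: L', ?_, by simpa using h2⟩
      rw [wordProd_cons, wordProd_cons, h1, mul_assoc]

/-- Minimal length words. -/
theorem exists_min_word (D : RootSystemWithBase V) (P : (V ≃ₗ[ℝ] V) → Prop)
    (h : ∃ w ∈ D.W, P w) :
    ∃ L, P (D.wordProd L) ∧ ∀ L', P (D.wordProd L') → L.length ≤ L'.length := by
  classical
  obtain ⟨w, hw, hP⟩ := h
  obtain ⟨L, rfl⟩ := D.exists_word hw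
  have hex : ∃ n, ∃ L, P (D.wordProd L) ∧ L.length = n := ⟨_, L, hP, rfl⟩
  obtain ⟨L0, h0, hn⟩ := Nat.find_spec hex
  refine ⟨L0, h0, fun L' hL' => ?_⟩
  rw [hn]
  exact Nat.find_min' hex ⟨L', hL', rfl⟩

theorem eq_one_of_pos (D : RootSystemWithBase V) {u : V ≃ₗ[ℝ] V} (hu : u ∈ D.W)
    (h : ∀ i, ∀ k, 0 ≤ D.co k (u (D.α i))) : u = 1 := by
  obtain ⟨L, hL, hmin⟩ := D.exists_min_word (fun w => w = u) ⟨u, hu, rfl⟩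
  rcases List.eq_nil_or_concat L with rfl | ⟨L1, i, rfl⟩
  · simpa [wordProd] using hL.symm
  · exfalso
    rw [List.concat_eq_append] at hL hmin
    rw [wordProd_concat] at hL
    have hL1 : D.wordProd L1 = u * D.s i := by
      rw [← hL, mul_assoc, s_mul_s, mul_one]
    obtain ⟨L', h1, h2⟩ := D.exchange i L1 (by
      intro k
      rw [hL1, LinearEquiv.mul_apply, s_self, map_neg, map_neg]
      have := h i k
      linarith)
    have := hmin L' (by rw [h1, hL])
    simp at this
    omega

theorem finite_W (D : RootSystemWithBase V) : (D.W : Set (V ≃ₗ[ℝ] V)).Finite := by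
  have hf : (Set.univ.pi fun _ : Fin D.l => (D.Φ : Set V)).Finite :=
    Set.Finite.pi fun _ => D.Φ.finite_toSet
  refine Set.Finite.of_finite_image (f := fun w => fun i => w (D.α i)) (hf.subset ?_) ?_
  · rintro _ ⟨w, hw, rfl⟩ i -
    exact (D.W_props hw).1 _ (D.α_mem i)
  · intro w _ w' _ h
    apply LinearEquiv.toLinearMap_injective
    apply D.bas.ext
    intro i
    rw [bas_apply]
    exact congrFun h i

theorem inner_nonpos_of_disj (D : RootSystemWithBase V) (p q : V)
    (hp : ∀ i, 0 ≤ D.co i p) (hq : ∀ i, 0 ≤ D.co i q)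
    (hd : ∀ i, D.co i p = 0 ∨ D.co i q = 0) : ⟪p, q⟫ ≤ 0 := by
  rw [inner_co]
  apply Finset.sum_nonpos
  intro i _
  rw [real_inner_comm, inner_co, Finset.mul_sum]
  apply Finset.sum_nonpos
  intro j _
  by_cases hij : i = j
  · subst hij
    rcases hd i with h | h <;> simp [h]
  · have := D.α_inner_nonpos hij
    have h1 := mul_nonneg (hq i) (hp j)
    nlinarith

theorem nonneg_of (D : RootSystemWithBase V) (x : V)
    (h : ∀ k, D.co k x < 0 → 0 ≤ ⟪x, D.α k⟫) : ∀ k, 0 ≤ D.co k x := by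
  set p : V := ∑ i, max (D.co i x) 0 • D.α i with hp
  set q : V := ∑ i, max (-D.co i x) 0 • D.α i with hq
  have hx : x = p - q := by
    apply D.co_ext
    intro i
    rw [map_sub, hp, hq, co_sum, co_sum]
    rcases le_total (D.co i x) 0 with h | h
    · rw [max_eq_right h, max_eq_left (by linarith)]; ring
    · rw [max_eq_left h, max_eq_right (by linarith)]; ring
  have h1 : ⟪p, q⟫ ≤ 0 := by
    apply D.inner_nonpos_of_disj
    · intro i; rw [hp, co_sum]; exact le_max_right _ _
    · intro i; rw [hq, co_sum]; exact le_max_right _ _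
    · intro i; rw [hp, hq, co_sum, co_sum]
      rcases le_total (D.co i x) 0 with h | h
      · left; exact max_eq_right h
      · right; exact max_eq_right (by linarith)
  have h2 : 0 ≤ ⟪x, q⟫ := by
    rw [inner_co]
    apply Finset.sum_nonneg
    intro i _
    rw [hq, co_sum]
    rcases lt_or_ge (D.co i x) 0 with h' | h'
    · exact mul_nonneg (le_max_right _ _) (h i h')
    · rw [max_eq_right (by linarith)]; simp
  have h3 : ⟪x, q⟫ = ⟪p, q⟫ - ⟪q, q⟫ := by
    conv_lhs => rw [hx]
    rw [inner_sub_left]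
  have h4 : q = 0 := by
    by_contra hne
    have := real_inner_self_pos.2 hne
    linarith
  intro k
  have h5 : D.co k q = 0 := by rw [h4, map_zero]
  rw [hq, co_sum] at h5
  have := le_max_left (-D.co k x) 0
  linarith

/-- The orbit. -/
def Orb (D : RootSystemWithBase V) (ω : V) : Set V := {x | ∃ w ∈ D.W, w ω = x}

theorem orb_finite (D : RootSystemWithBase V) (ω : V) : (D.Orb ω).Finite := by
  have h : Set.image (fun w : V ≃ₗ[ℝ] V => w ω) (D.W : Set (V ≃ₗ[ℝ] V)) = D.Orb ω := rfl
  rw [← h]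
  exact D.finite_W.image _

theorem orb_self (D : RootSystemWithBase V) (ω : V) : ω ∈ D.Orb ω := ⟨1, D.W.one_mem, rfl⟩

theorem orb_s (D : RootSystemWithBase V) {ω x : V} (hx : x ∈ D.Orb ω) (i : Fin D.l) :
    D.s i x ∈ D.Orb ω := by
  obtain ⟨w, hw, rfl⟩ := hx
  exact ⟨D.s i * w, D.W.mul_mem (D.s_mem i) hw, rfl⟩

theorem orb_norm (D : RootSystemWithBase V) {ω x : V} (hx : x ∈ D.Orb ω) :
    ⟪x, x⟫ = ⟪ω, ω⟫ := by
  obtain ⟨w, hw, rfl⟩ := hx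
  exact (D.W_props hw).2 _ _

theorem orb_pairing (D : RootSystemWithBase V) {ω x : V} (hm : D.IsMinuscule ω)
    (hx : x ∈ D.Orb ω) (i : Fin D.l) :
    D.pairing x (D.α i) = -1 ∨ D.pairing x (D.α i) = 0 ∨ D.pairing x (D.α i) = 1 := by
  obtain ⟨w, hw, rfl⟩ := hx
  have hw' := D.W.inv_mem hw
  have h := hm.2 _ ((D.W_props hw').1 _ (D.α_mem i))
  have e : D.pairing ω (w⁻¹ (D.α i)) = D.pairing (w ω) (D.α i) := by
    unfold pairing
    rw [(D.W_props hw').2, ← (D.W_props hw).2 ω]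
    congr 3
    exact LinearEquiv.apply_symm_apply w _
  rwa [e] at h

theorem pairing_pos_iff (D : RootSystemWithBase V) (x : V) (i : Fin D.l) :
    0 < D.pairing x (D.α i) ↔ 0 < ⟪x, D.α i⟫ := by
  have := D.α_pos i
  unfold pairing
  rw [div_pos_iff_of_pos_right this]
  constructor <;> intro <;> linarith

theorem pairing_neg_iff (D : RootSystemWithBase V) (x : V) (i : Fin D.l) :
    D.pairing x (D.α i) < 0 ↔ ⟪x, D.α i⟫ < 0 := by
  have := D.α_pos i
  unfold pairing
  rw [div_lt_iff₀ this, zero_mul]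
  constructor <;> intro <;> linarith

theorem orb_down (D : RootSystemWithBase V) {ω x : V} (hm : D.IsMinuscule ω)
    (hx : x ∈ D.Orb ω) (i : Fin D.l) (h : 0 < ⟪x, D.α i⟫) : x - D.α i ∈ D.Orb ω := by
  have h1 := D.orb_s hx i
  rw [s_apply] at h1
  have h2 := (D.pairing_pos_iff x i).2 h
  have h3 : D.pairing x (D.α i) = 1 := by
    rcases D.orb_pairing hm hx i with h | h | h <;> linarith
  unfold pairing at h3
  rwa [h3, one_smul] at h1

theorem orb_up (D : RootSystemWithBase V) {ω x : V} (hm : D.IsMinuscule ω)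
    (hx : x ∈ D.Orb ω) (i : Fin D.l) (h : ⟪x, D.α i⟫ < 0) : x + D.α i ∈ D.Orb ω := by
  have h1 := D.orb_s hx i
  rw [s_apply] at h1
  have h2 := (D.pairing_neg_iff x i).2 h
  have h3 : D.pairing x (D.α i) = -1 := by
    rcases D.orb_pairing hm hx i with h | h | h <;> linarith
  unfold pairing at h3
  rwa [h3, neg_one_smul, sub_neg_eq_add] at h1

theorem orb_ind (D : RootSystemWithBase V) {ω : V} (hm : D.IsMinuscule ω) (P : V → Prop)
    (h0 : P ω) (hd : ∀ x i, x ∈ D.Orb ω → P x → x - D.α i ∈ D.Orb ω → P (x - D.α i))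
    (hu : ∀ x i, x ∈ D.Orb ω → P x → x + D.α i ∈ D.Orb ω → P (x + D.α i)) {x : V}
    (hx : x ∈ D.Orb ω) : P x := by
  obtain ⟨w, hw, rfl⟩ := hx
  obtain ⟨L, rfl⟩ := D.exists_word hw
  clear hw
  induction L with
  | nil => exact h0
  | cons i L ih =>
    rw [wordProd_cons, LinearEquiv.mul_apply]
    set y := D.wordProd L ω with hy
    have hyo : y ∈ D.Orb ω := ⟨_, D.wordProd_mem L, rfl⟩
    have hs := D.orb_s hyo i
    have e : D.s i y = y - D.pairing y (D.α i) • D.α i := D.s_apply i y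
    rcases D.orb_pairing hm hyo i with h | h | h
    · rw [h, neg_one_smul, sub_neg_eq_add] at e
      rw [e] at hs ⊢
      exact hu _ _ hyo ih hs
    · rw [h, zero_smul, sub_zero] at e
      rw [e]; exact ih
    · rw [h, one_smul] at e
      rw [e] at hs ⊢
      exact hd _ _ hyo ih hs

theorem orb_int (D : RootSystemWithBase V) {ω x : V} (hm : D.IsMinuscule ω)
    (hx : x ∈ D.Orb ω) (k : Fin D.l) : ∃ n : ℤ, D.co k x = D.co k ω + n := by
  refine D.orb_ind hm (fun x => ∃ n : ℤ, D.co k x = D.co k ω + n) ⟨0, by simp⟩ ?_ ?_ hx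
  · rintro x i - ⟨n, hn⟩ -
    refine ⟨n - if i = k then 1 else 0, ?_⟩
    rw [map_sub, hn, co_α]; push_cast; ring
  · rintro x i - ⟨n, hn⟩ -
    refine ⟨n + if i = k then 1 else 0, ?_⟩
    rw [map_add, hn, co_α]; push_cast; ring

/-- Elements of the coset of minimal norm are exactly those in the orbit. -/
theorem mem_orb_of_norm_le (D : RootSystemWithBase V) {ω z : V} (hm : D.IsMinuscule ω)
    (hz : ∀ k, ∃ n : ℤ, D.co k z = D.co k ω + n) (hn : ⟪z, z⟫ ≤ ⟪ω, ω⟫) : z ∈ D.Orb ω := by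
  obtain ⟨y, hy, hmin⟩ := Set.exists_min_image (D.Orb ω)
    (fun y => ∑ k, |D.co k y - D.co k z|) (D.orb_finite ω) ⟨ω, D.orb_self ω⟩
  have hdiff : ∀ k, ∃ n : ℤ, D.co k y - D.co k z = n := by
    intro k
    obtain ⟨a, ha⟩ := hz k
    obtain ⟨b, hb⟩ := D.orb_int hm hy k
    exact ⟨b - a, by rw [ha, hb]; push_cast; ring⟩
  have key : ⟪y, y - z⟫ ≤ 0 := by
    rw [inner_co]
    apply Finset.sum_nonpos
    intro k _
    rw [map_sub]
    obtain ⟨n, hk⟩ := hdiff k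
    by_contra hcon
    push Not at hcon
    rcases pos_and_pos_or_neg_and_neg_of_mul_pos hcon with ⟨h1, h2⟩ | ⟨h1, h2⟩
    · have hd := hmin _ (D.orb_down hm hy k h2)
      refine absurd hd (not_le.2 ?_)
      rw [hk] at h1
      have h1' : (1:ℝ) ≤ n := by exact_mod_cast (by exact_mod_cast h1 : 0 < n)
      apply Finset.sum_lt_sum
      · intro j _
        rw [map_sub, co_α]
        by_cases hj : k = j
        · subst hj
          rw [if_pos rfl, hk, abs_of_pos h1, abs_of_nonneg (by linarith)]
          linarith
        · simp [hj]
      · refine ⟨k, Finset.mem_univ _, ?_⟩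
        rw [map_sub, co_α, if_pos rfl, hk, abs_of_pos h1, abs_of_nonneg (by linarith)]
        linarith
    · have hd := hmin _ (D.orb_up hm hy k h2)
      refine absurd hd (not_le.2 ?_)
      rw [hk] at h1
      have h1' : (n:ℝ) ≤ -1 := by
        have : n < 0 := by exact_mod_cast h1
        exact_mod_cast (by omega : n ≤ -1)
      apply Finset.sum_lt_sum
      · intro j _
        rw [map_add, co_α]
        by_cases hj : k = j
        · subst hj
          rw [if_pos rfl, hk, abs_of_neg h1, abs_of_nonpos (by linarith)]
          linarith
        · simp [hj]
      · refine ⟨k, Finset.mem_univ _, ?_⟩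
        rw [map_add, co_α, if_pos rfl, hk, abs_of_neg h1, abs_of_nonpos (by linarith)]
        linarith
  by_cases hyz : y - z = 0
  · rw [sub_eq_zero] at hyz; rwa [← hyz]
  · exfalso
    have h1 := real_inner_self_pos.2 hyz
    have h2 := D.orb_norm hy
    simp only [inner_sub_left, inner_sub_right] at h1 key
    rw [real_inner_comm y z] at h1
    linarith

theorem orb_min (D : RootSystemWithBase V) {ω x y : V} (hm : D.IsMinuscule ω)
    (hx : x ∈ D.Orb ω) (hy : y ∈ D.Orb ω) :
    ∑ i, min (D.co i x) (D.co i y) • D.α i ∈ D.Orb ω := by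
  set z : V := ∑ i, min (D.co i x) (D.co i y) • D.α i with hz
  set a := x - z with ha
  set b := y - z with hb
  have hab : ⟪a, b⟫ ≤ 0 := by
    apply D.inner_nonpos_of_disj
    · intro i; rw [ha, map_sub, hz, co_sum]; linarith [min_le_left (D.co i x) (D.co i y)]
    · intro i; rw [hb, map_sub, hz, co_sum]; linarith [min_le_right (D.co i x) (D.co i y)]
    · intro i; rw [ha, hb, map_sub, map_sub, hz, co_sum]
      rcases le_total (D.co i x) (D.co i y) with h | h
      · left; rw [min_eq_left h]; ring
      · right; rw [min_eq_right h]; ring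
  have hzi : ∀ k, ∃ n : ℤ, D.co k z = D.co k ω + n := by
    intro k
    rw [hz, co_sum]
    rcases le_total (D.co k x) (D.co k y) with h | h
    · rw [min_eq_left h]; exact D.orb_int hm hx k
    · rw [min_eq_right h]; exact D.orb_int hm hy k
  by_contra hcon
  have h1 : ⟪ω, ω⟫ < ⟪z, z⟫ := by
    by_contra h; exact hcon (D.mem_orb_of_norm_le hm hzi (not_lt.1 h))
  have h2 : ⟪ω, ω⟫ ≤ ⟪z + a + b, z + a + b⟫ := by
    by_contra h
    push Not at h
    have hM : z + a + b ∈ D.Orb ω := by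
      refine D.mem_orb_of_norm_le hm ?_ h.le
      intro k
      obtain ⟨n1, e1⟩ := D.orb_int hm hx k
      obtain ⟨n2, e2⟩ := D.orb_int hm hy k
      obtain ⟨n3, e3⟩ := hzi k
      refine ⟨n1 + n2 - n3, ?_⟩
      rw [map_add, map_add, ha, hb, map_sub, map_sub, e1, e2, e3]
      push_cast; ring
    have := D.orb_norm hM
    linarith
  have ex : x = z + a := by rw [ha]; abel
  have ey : y = z + b := by rw [hb]; abel
  have h3 := D.orb_norm hx
  have h4 := D.orb_norm hy
  rw [ex] at h3
  rw [ey] at h4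
  simp only [inner_add_left, inner_add_right] at h2 h3 h4
  rw [real_inner_comm a z] at h2 h3
  rw [real_inner_comm b z] at h2 h4
  rw [real_inner_comm a b] at h2
  linarith

theorem exists_lt_one (D : RootSystemWithBase V) {ω : V} (hm : D.IsMinuscule ω) (i : Fin D.l)
    (hi : 0 ≤ D.co i ω) : ∃ x ∈ D.Orb ω, 0 ≤ D.co i x ∧ D.co i x < 1 := by
  by_contra hcon
  push Not at hcon
  have hall : ∀ x ∈ D.Orb ω, 1 ≤ D.co i x := by
    intro x hx
    refine D.orb_ind hm (fun x => 1 ≤ D.co i x) (hcon _ (D.orb_self ω) hi) ?_ ?_ hx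
    · intro x k _ h h'
      apply hcon _ h'
      rw [map_sub, co_α]
      split_ifs <;> linarith
    · intro x k _ h h'
      rw [map_add, co_α]
      split_ifs <;> linarith
  obtain ⟨y, hy, hmin⟩ := Set.exists_min_image (D.Orb ω)
    (fun y => ∑ k, D.co k y) (D.orb_finite ω) ⟨ω, D.orb_self ω⟩
  have hneg : ∀ k, ⟪y, D.α k⟫ ≤ 0 := by
    intro k
    by_contra h
    have := hmin _ (D.orb_down hm hy k (not_le.1 h))
    simp only [map_sub, co_α, Finset.sum_sub_distrib] at this
    simp at this
    linarith
  have := D.nonneg_of (-y) (fun k _ => by rw [inner_neg_left]; linarith [hneg k]) i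
  rw [map_neg] at this
  linarith [hall y hy]

theorem exists_nonneg_lt_one (D : RootSystemWithBase V) {ω : V} (hm : D.IsMinuscule ω)
    (i : Fin D.l) (hi : 0 ≤ D.co i ω) :
    ∃ x ∈ D.Orb ω, (∀ k, 0 ≤ D.co k x) ∧ D.co i x < 1 := by
  obtain ⟨x0, hx0, h0, h1⟩ := D.exists_lt_one hm i hi
  obtain ⟨y, ⟨hy, hy0, hy1⟩, hmax⟩ := Set.exists_max_image
    {x | x ∈ D.Orb ω ∧ 0 ≤ D.co i x ∧ D.co i x < 1}
    (fun y => ∑ k, D.co k y) ((D.orb_finite ω).subset fun x hx => hx.1) ⟨x0, hx0, h0, h1⟩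
  refine ⟨y, hy, ?_, hy1⟩
  apply D.nonneg_of
  intro k hk
  by_contra h
  have hki : k ≠ i := by rintro rfl; linarith
  have := hmax (y + D.α k) ⟨D.orb_up hm hy k (not_le.1 h), by
    rw [map_add, co_α, if_neg hki]; constructor <;> linarith⟩
  simp only [map_add, co_α, Finset.sum_add_distrib] at this
  simp at this
  linarith

theorem exists_fract (D : RootSystemWithBase V) {ω : V} (hm : D.IsMinuscule ω)
    (hω : ∀ i, 0 ≤ D.co i ω) :
    ∃ x ∈ D.Orb ω, ∀ k, 0 ≤ D.co k x ∧ D.co k x < 1 := by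
  obtain ⟨y, ⟨hy, hy0⟩, hmin⟩ := Set.exists_min_image
    {x | x ∈ D.Orb ω ∧ ∀ k, 0 ≤ D.co k x}
    (fun y => ∑ k, D.co k y) ((D.orb_finite ω).subset fun x hx => hx.1) ⟨ω, D.orb_self ω, hω⟩
  refine ⟨y, hy, fun k => ⟨hy0 k, ?_⟩⟩
  obtain ⟨x, hx, hx0, hx1⟩ := D.exists_nonneg_lt_one hm k (hω k)
  by_contra h
  push Not at h
  have := hmin _ ⟨D.orb_min hm hy hx, fun j => by
    rw [co_sum]; exact le_min (hy0 j) (hx0 j)⟩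
  refine absurd this (not_le.2 ?_)
  apply Finset.sum_lt_sum
  · intro j _; rw [co_sum]; exact min_le_left _ _
  · refine ⟨k, Finset.mem_univ _, ?_⟩
    rw [co_sum]; exact (min_le_right _ _).trans_lt (by linarith)

theorem isPos_iff (D : RootSystemWithBase V) {β : V} (hβ : β ∈ D.Φ) :
    D.IsPos β ↔ ∀ i, 0 ≤ D.co i β := by
  unfold IsPos
  rw [nonnegComb_iff]
  exact ⟨fun h => h.1, fun h => ⟨h, D.root_ne_zero _ hβ⟩⟩

theorem exists_WI (D : RootSystemWithBase V) {ω x : V} (hx : x ∈ D.Orb ω) :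
    ∃ w ∈ D.WI ω, w ω = x := by
  obtain ⟨L, hL, hmin⟩ := D.exists_min_word (fun w => w ω = x) hx
  refine ⟨D.wordProd L, ⟨D.wordProd_mem L, fun i hi => ?_⟩, hL⟩
  have hr := (D.W_props (D.wordProd_mem L)).1 _ (D.α_mem i)
  rw [D.isPos_iff hr]
  rcases D.root_sign hr with h | h
  · exact h
  · exfalso
    obtain ⟨L', h1, h2⟩ := D.exchange i L h
    have := hmin L' (by
      rw [h1, LinearEquiv.mul_apply]
      have : D.s i ω = ω := by
        rw [s_apply]; unfold pairing at hi; rw [hi, zero_smul, sub_zero]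
      rw [this]; exact hL)
    omega

theorem unique_WI (D : RootSystemWithBase V) {ω : V} (hd : D.IsDominant ω)
    {w w' : V ≃ₗ[ℝ] V} (hw : w ∈ D.WI ω) (hw' : w' ∈ D.WI ω) (h : w ω = w' ω) : w = w' := by
  obtain ⟨hW, hp⟩ := hw
  obtain ⟨hW', hp'⟩ := hw'
  have huW : w'⁻¹ * w ∈ D.W := D.W.mul_mem (D.W.inv_mem hW') hW
  have hfix : (w'⁻¹ * w) ω = ω := by
    rw [LinearEquiv.mul_apply, h]; exact LinearEquiv.symm_apply_apply w' _
  have hdom : ∀ i, 0 ≤ ⟪ω, D.α i⟫ := by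
    intro i
    by_contra hc
    have := (D.pairing_neg_iff ω i).2 (not_le.1 hc)
    linarith [hd i]
  have hu1 : w'⁻¹ * w = 1 := by
    apply D.eq_one_of_pos huW
    intro i
    set δ := (w'⁻¹ * w) (D.α i) with hδ
    have hδr : δ ∈ D.Φ := (D.W_props huW).1 _ (D.α_mem i)
    rcases D.root_sign hδr with hs | hs
    · exact hs
    exfalso
    have hin : ⟪ω, δ⟫ = ⟪ω, D.α i⟫ := by
      rw [← (D.W_props huW).2 ω (D.α i), hfix]
    have hterm : ∀ k, D.co k δ * ⟪ω, D.α k⟫ ≤ 0 := fun k =>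
      mul_nonpos_of_nonpos_of_nonneg (hs k) (hdom k)
    have hsum : ⟪ω, δ⟫ = ∑ k, D.co k δ * ⟪ω, D.α k⟫ := D.inner_co ω δ
    have hle : ∑ k, D.co k δ * ⟪ω, D.α k⟫ ≤ 0 := Finset.sum_nonpos fun k _ => hterm k
    have hz : ⟪ω, D.α i⟫ = 0 := le_antisymm (by linarith) (hdom i)
    have hz2 : ∑ k, D.co k δ * ⟪ω, D.α k⟫ = 0 := by linarith
    have hz3 := (Finset.sum_eq_zero_iff_of_nonpos fun k _ => hterm k).1 hz2
    have hpi := ((D.isPos_iff ((D.W_props hW).1 _ (D.α_mem i))).1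
      (hp i (by unfold pairing; rw [hz]; simp)))
    have hwδ : w' δ = w (D.α i) := by
      rw [hδ, LinearEquiv.mul_apply]; exact LinearEquiv.apply_symm_apply w' _
    refine D.not_both ((D.W_props hW).1 _ (D.α_mem i)) hpi ?_
    intro j
    rw [← hwδ, ← D.sum_co δ, map_sum, map_sum]
    apply Finset.sum_nonpos
    intro k _
    rw [map_smul, map_smul, smul_eq_mul]
    rcases mul_eq_zero.1 (hz3 k (Finset.mem_univ _)) with h0 | h0
    · rw [h0, zero_mul]
    · have := ((D.isPos_iff ((D.W_props hW').1 _ (D.α_mem k))).1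
        (hp' k (by unfold pairing; rw [h0]; simp))) j
      exact mul_nonpos_of_nonpos_of_nonneg (hs k) this
  exact (inv_mul_eq_one.1 hu1).symm

end RootSystemWithBase

/-- Let `ω = ∑ m i • α i` be a minuscule weight with nonnegative
rational coefficients.  Then there is a unique `τ ∈ W^I` with
`τ(ω) = ∑ (m i − ⌊m i⌋) • α i`. -/
theorem stmt6 {V : Type*} [NormedAddCommGroup V] [InnerProductSpace ℝ V]
    (D : RootSystemWithBase V) (m : Fin D.l → ℚ) (hm : ∀ i, 0 ≤ m i)
    (ω : V) (hω : ω = ∑ i, (m i : ℝ) • D.α i) (hmin : D.IsMinuscule ω) :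
    ∃! τ : V ≃ₗ[ℝ] V, τ ∈ D.WI ω ∧
      τ ω = ∑ i, ((m i : ℝ) - ((⌊m i⌋ : ℤ) : ℝ)) • D.α i := by

  have hc : ∀ i, D.co i ω = (m i : ℝ) := fun i => by rw [hω, D.co_sum]
  obtain ⟨x, hx, hx1⟩ := D.exists_fract hmin (fun i => by rw [hc]; exact_mod_cast hm i)
  have hxe : x = ∑ i, ((m i : ℝ) - ((⌊m i⌋ : ℤ) : ℝ)) • D.α i := by
    apply D.co_ext
    intro i
    rw [D.co_sum]
    obtain ⟨n, hn⟩ := D.orb_int hmin hx i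
    obtain ⟨h0, h1⟩ := hx1 i
    rw [hn, hc] at h0 h1
    have hf : ⌊m i⌋ = -n := by
      rw [Int.floor_eq_iff]
      have h0' : (0:ℚ) ≤ m i + n := by exact_mod_cast h0
      have h1' : m i + n < (1:ℚ) := by exact_mod_cast h1
      push_cast
      constructor <;> linarith
    rw [hn, hc, hf]; push_cast; ring
  rw [← hxe]
  obtain ⟨w, hw, hwx⟩ := D.exists_WI hx
  refine ⟨w, ⟨hw, hwx⟩, ?_⟩
  rintro w' ⟨hw', hwx'⟩
  exact D.unique_WI hmin.1 hw' hw (hwx'.trans hwx.symm)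
end
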